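/- arXiv:2203.10329 — 2 statements merged into one kernel-verified Lean document; each statement's English description precedes it below -/
import Mathlib

section
/- Let f : ℝ^d → ℝ be L-smooth, let μ > 0, and let f_μ be its Gaussian smoothing. Then for every x ∈ ℝ^d, ‖∇f_μ(x) − ∇f(x)‖² ≤ μ² L² (d + 3)³ / 4. -/
open MeasureTheory ProbabilityTheory

/-- The standard multivariate Gaussian distribution `N(0, I_d)` on `ℝ^d`. -/
noncomputable def stdGaussian (d : ℕ) : Measure (EuclideanSpace ℝ (Fin d)) :=
  (Measure.pi fun _ : Fin d => gaussianReal 0 1).map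
    (MeasurableEquiv.toLp 2 (Fin d → ℝ))

/-!
Differentiation commutes with smoothing, so `∇f_μ(x) - ∇f(x) = E[∇f(x + μ u) - ∇f(x)]`. Since `∇f`
is `L`-Lipschitz, this has norm at most `|μ| L E‖u‖`, and `(E‖u‖)² ≤ E‖u‖² = d ≤ (d + 3)³ / 4`.
-/

open scoped NNReal RealInnerProductSpace

section Lipschitz

variable {E F : Type*} [NormedAddCommGroup E] [NormedAddCommGroup F] {K : ℝ≥0}

lemma memLp_comp_of_lipschitzWith {Ω : Type*} [MeasurableSpace Ω] {P : Measure Ω}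
    [IsFiniteMeasure P] {X : Ω → E} {p : ENNReal} {g : E → F} (hg : LipschitzWith K g)
    (hX : MemLp X p P) : MemLp (fun ω => g (X ω)) p P := by
  have hcentered : LipschitzWith K fun y => g y - g 0 :=
    LipschitzWith.of_dist_le_mul fun y z => by
      simpa only [dist_sub_right] using hg.dist_le_mul y z
  simpa only [Function.comp_def, Pi.add_def, sub_add_cancel] using
    (hcentered.comp_memLp (sub_self _) hX).add (memLp_const (g 0))

variable [NormedSpace ℝ E] [NormedSpace ℝ F]

lemma norm_sub_le_of_lipschitzWith_fderiv {f : E → F} (hf : Differentiable ℝ f)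
    (hK : LipschitzWith K (fderiv ℝ f)) (x v : E) :
    ‖f (x + v) - f x‖ ≤ (‖fderiv ℝ f x‖ + K * ‖v‖) * ‖v‖ := by
  have hbound : ∀ y ∈ Metric.closedBall x ‖v‖, ‖fderiv ℝ f y‖ ≤ ‖fderiv ℝ f x‖ + K * ‖v‖ :=
    fun y hy => calc
      ‖fderiv ℝ f y‖ ≤ ‖fderiv ℝ f x‖ + ‖fderiv ℝ f y - fderiv ℝ f x‖ := norm_le_insert' _ _
      _ ≤ ‖fderiv ℝ f x‖ + K * ‖y - x‖ := by gcongr; exact hK.norm_sub_le y x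
      _ ≤ ‖fderiv ℝ f x‖ + K * ‖v‖ := by gcongr; exact mem_closedBall_iff_norm.1 hy
  have hmem : x + v ∈ Metric.closedBall x ‖v‖ :=
    mem_closedBall_iff_norm.2 (by rw [add_sub_cancel_left])
  have hmvt := (convex_closedBall x ‖v‖).norm_image_sub_le_of_norm_fderiv_le (fun y _ => hf y)
    hbound (Metric.mem_closedBall_self (norm_nonneg v)) hmem
  rwa [add_sub_cancel_left] at hmvt

end Lipschitz

section Smoothing

variable {Ω E F : Type*} [MeasurableSpace Ω] [NormedAddCommGroup E] [NormedAddCommGroup F]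
  {P : Measure Ω} {X : Ω → E} {K : ℝ≥0}

lemma sq_integral_norm_le_integral_norm_sq [IsProbabilityMeasure P] (hX : MemLp X 2 P) :
    (∫ ω, ‖X ω‖ ∂P) ^ 2 ≤ ∫ ω, ‖X ω‖ ^ 2 ∂P := by
  have hvar := variance_nonneg (fun ω => ‖X ω‖) P
  rw [variance_eq_sub hX.norm] at hvar
  exact sub_nonneg.1 hvar

lemma integrable_comp_add_of_lipschitzWith [IsFiniteMeasure P] {g : E → F}
    (hg : LipschitzWith K g) (hX : Integrable X P) (x : E) :
    Integrable (fun ω => g (x + X ω)) P :=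
  memLp_one_iff_integrable.1 <| memLp_comp_of_lipschitzWith hg <|
    memLp_one_iff_integrable.2 <| (integrable_const x).add hX

variable [NormedSpace ℝ F]

/-- The smoothing `x ↦ E[f (x + X)]` of `f` by a random vector `X`. The Gaussian smoothing `f_μ` is
the case `X = μ u` with `u` standard Gaussian. -/
noncomputable def smoothing (P : Measure Ω) (X : Ω → E) (f : E → F) (x : E) : F :=
  ∫ ω, f (x + X ω) ∂P

lemma norm_smoothing_sub_le [CompleteSpace F] [IsProbabilityMeasure P] {g : E → F}
    (hg : LipschitzWith K g) (hX : Integrable X P) (x : E) :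
    ‖smoothing P X g x - g x‖ ≤ K * ∫ ω, ‖X ω‖ ∂P := by
  have hsub : smoothing P X g x - g x = ∫ ω, (g (x + X ω) - g x) ∂P := by
    rw [integral_sub (integrable_comp_add_of_lipschitzWith hg hX x) (integrable_const _),
      integral_const, probReal_univ, one_smul, smoothing]
  rw [hsub, ← integral_const_mul]
  refine norm_integral_le_of_norm_le (hX.norm.const_mul _) (.of_forall fun ω => ?_)
  simpa only [add_sub_cancel_left] using hg.norm_sub_le (x + X ω) x

variable [NormedSpace ℝ E] {f : E → F}

lemma integrable_comp_add_of_lipschitzWith_fderiv [IsFiniteMeasure P] (hf : Differentiable ℝ f)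
    (hK : LipschitzWith K (fderiv ℝ f)) (hX : MemLp X 2 P) (x : E) :
    Integrable (fun ω => f (x + X ω)) P := by
  have hmeas : AEStronglyMeasurable (fun ω => f (x + X ω)) P :=
    (hf.continuous.comp (continuous_const_add x)).comp_aestronglyMeasurable
      hX.aestronglyMeasurable
  have hbound : Integrable
      (fun ω => ‖f x‖ + (‖fderiv ℝ f x‖ * ‖X ω‖ + K * ‖X ω‖ ^ 2)) P :=
    (integrable_const _).add <| ((hX.integrable one_le_two).norm.const_mul _).add <|
      (hX.integrable_norm_pow two_ne_zero).const_mul _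
  refine hbound.mono' hmeas (.of_forall fun ω => ?_)
  calc ‖f (x + X ω)‖ ≤ ‖f x‖ + ‖f (x + X ω) - f x‖ := norm_le_insert' _ _
    _ ≤ ‖f x‖ + (‖fderiv ℝ f x‖ + K * ‖X ω‖) * ‖X ω‖ := by
      gcongr; exact norm_sub_le_of_lipschitzWith_fderiv hf hK x (X ω)
    _ = ‖f x‖ + (‖fderiv ℝ f x‖ * ‖X ω‖ + K * ‖X ω‖ ^ 2) := by ring

lemma hasFDerivAt_smoothing [IsFiniteMeasure P] (hf : Differentiable ℝ f)
    (hK : LipschitzWith K (fderiv ℝ f)) (hX : MemLp X 2 P) (x : E) :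
    HasFDerivAt (smoothing P X f) (smoothing P X (fderiv ℝ f) x) x := by
  have hint := integrable_comp_add_of_lipschitzWith_fderiv hf hK hX
  have hint' := integrable_comp_add_of_lipschitzWith hK (hX.integrable one_le_two) x
  have hbound (ω : Ω) (y : E) (hy : y ∈ Metric.ball x 1) :
      ‖fderiv ℝ f (y + X ω)‖ ≤ ‖fderiv ℝ f (x + X ω)‖ + K := calc
    _ ≤ ‖fderiv ℝ f (x + X ω)‖ + ‖fderiv ℝ f (y + X ω) - fderiv ℝ f (x + X ω)‖ :=
      norm_le_insert' _ _
    _ ≤ ‖fderiv ℝ f (x + X ω)‖ + K * ‖y - x‖ := by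
      gcongr; simpa only [add_sub_add_right_eq_sub] using hK.norm_sub_le (y + X ω) (x + X ω)
    _ ≤ ‖fderiv ℝ f (x + X ω)‖ + K := by
      gcongr; exact mul_le_of_le_one_right K.coe_nonneg (mem_ball_iff_norm.1 hy).le
  exact hasFDerivAt_integral_of_dominated_of_fderiv_le (𝕜 := ℝ)
    (F' := fun y ω => fderiv ℝ f (y + X ω)) (Metric.ball_mem_nhds x one_pos)
    (.of_forall fun y => (hint y).aestronglyMeasurable) (hint x) hint'.aestronglyMeasurable
    (.of_forall hbound) (hint'.norm.add (integrable_const _))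
    (.of_forall fun ω y _ => (hasFDerivAt_comp_add_right (X ω)).2 (hf (y + X ω)).hasFDerivAt)

lemma norm_fderiv_smoothing_sub_sq_le [CompleteSpace F] [IsProbabilityMeasure P]
    (hf : Differentiable ℝ f) (hK : LipschitzWith K (fderiv ℝ f)) (hX : MemLp X 2 P) (x : E) :
    ‖fderiv ℝ (smoothing P X f) x - fderiv ℝ f x‖ ^ 2 ≤ K ^ 2 * ∫ ω, ‖X ω‖ ^ 2 ∂P := calc
  _ = ‖smoothing P X (fderiv ℝ f) x - fderiv ℝ f x‖ ^ 2 := by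
    rw [(hasFDerivAt_smoothing hf hK hX x).fderiv]
  _ ≤ (K * ∫ ω, ‖X ω‖ ∂P) ^ 2 := by
    gcongr; exact norm_smoothing_sub_le hK (hX.integrable one_le_two) x
  _ = K ^ 2 * (∫ ω, ‖X ω‖ ∂P) ^ 2 := mul_pow _ _ _
  _ ≤ K ^ 2 * ∫ ω, ‖X ω‖ ^ 2 ∂P := by gcongr; exact sq_integral_norm_le_integral_norm_sq hX

end Smoothing

section Gradient

variable {𝕜 E : Type*} [RCLike 𝕜] [NormedAddCommGroup E] [InnerProductSpace 𝕜 E] [CompleteSpace E]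

lemma norm_gradient_sub_gradient (f g : E → 𝕜) (x y : E) :
    ‖gradient f x - gradient g y‖ = ‖fderiv 𝕜 f x - fderiv 𝕜 g y‖ := by
  simp only [gradient, ← map_sub, LinearIsometryEquiv.norm_map]

end Gradient

section StdGaussian

variable {E : Type*} [NormedAddCommGroup E] [InnerProductSpace ℝ E] [FiniteDimensional ℝ E]
  [MeasurableSpace E] [BorelSpace E]

lemma integral_inner_sq_stdGaussian (v : E) :
    ∫ u, ⟪v, u⟫ ^ 2 ∂ProbabilityTheory.stdGaussian E = ‖v‖ ^ 2 := by
  have hvar := variance_dual_stdGaussian (innerSL ℝ v)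
  rwa [variance_of_integral_eq_zero (innerSL ℝ v).continuous.aemeasurable
    (integral_strongDual_stdGaussian _), innerSL_apply_norm] at hvar

variable (E) in
lemma integral_norm_sq_stdGaussian :
    ∫ u, ‖u‖ ^ 2 ∂ProbabilityTheory.stdGaussian E = Module.finrank ℝ E := by
  let b := stdOrthonormalBasis ℝ E
  have hint (i) : Integrable (fun u => ⟪b i, u⟫ ^ 2) (ProbabilityTheory.stdGaussian E) :=
    (IsGaussian.memLp_dual _ (innerSL ℝ (b i)) 2 (by simp)).integrable_sq
  calc ∫ u, ‖u‖ ^ 2 ∂ProbabilityTheory.stdGaussian E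
      = ∫ u, ∑ i, ⟪b i, u⟫ ^ 2 ∂ProbabilityTheory.stdGaussian E := by
        simp only [b.sum_sq_inner_right]
    _ = ∑ i, ‖b i‖ ^ 2 := by
        simp only [integral_finsetSum _ fun i _ => hint i, integral_inner_sq_stdGaussian]
    _ = Module.finrank ℝ E := by simp

theorem gaussian_smoothing_gradient_bound_general {L μ : ℝ} {f fμ : E → ℝ}
    (hdiff : Differentiable ℝ f)
    (hlip : ∀ x y, ‖gradient f x - gradient f y‖ ≤ L * ‖x - y‖)
    (hfμ : ∀ x, fμ x = ∫ u, f (x + μ • u) ∂ProbabilityTheory.stdGaussian E) (x : E) :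
    ‖gradient fμ x - gradient f x‖ ^ 2 ≤ μ ^ 2 * L ^ 2 * Module.finrank ℝ E := by
  have hK : LipschitzWith (Real.nnabs L) (fderiv ℝ f) := by
    refine LipschitzWith.of_dist_le_mul fun y z => ?_
    rw [dist_eq_norm, dist_eq_norm, ← norm_gradient_sub_gradient, Real.coe_nnabs]
    exact (hlip y z).trans (by gcongr; exact le_abs_self L)
  have hsmoothing : fμ = smoothing (ProbabilityTheory.stdGaussian E) (fun u => μ • u) f :=
    funext hfμ
  have hmoment :
      ∫ u, ‖μ • u‖ ^ 2 ∂ProbabilityTheory.stdGaussian E = μ ^ 2 * Module.finrank ℝ E := by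
    simp only [norm_smul, mul_pow, Real.norm_eq_abs, sq_abs, integral_const_mul,
      integral_norm_sq_stdGaussian]
  calc ‖gradient fμ x - gradient f x‖ ^ 2
      ≤ (Real.nnabs L : ℝ) ^ 2 * ∫ u, ‖μ • u‖ ^ 2 ∂ProbabilityTheory.stdGaussian E := by
        rw [norm_gradient_sub_gradient, hsmoothing]
        exact norm_fderiv_smoothing_sub_sq_le hdiff hK (IsGaussian.memLp_two_id.const_smul μ) x
    _ = μ ^ 2 * L ^ 2 * Module.finrank ℝ E := by
        rw [hmoment, Real.coe_nnabs, sq_abs]; ring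

end StdGaussian

lemma stdGaussian_eq_probabilityTheory_stdGaussian (d : ℕ) :
    _root_.stdGaussian d = ProbabilityTheory.stdGaussian (EuclideanSpace ℝ (Fin d)) :=
  map_pi_eq_stdGaussian

/-- The gradient of the Gaussian smoothing `f_μ` of an `L`-smooth function `f` satisfies
`‖∇f_μ(x) − ∇f(x)‖² ≤ μ² L² (d + 3)³ / 4`. -/
theorem gaussian_smoothing_gradient_bound
    (d : ℕ) (L μ : ℝ) (hμ : 0 < μ)
    (f : EuclideanSpace ℝ (Fin d) → ℝ)
    (hdiff : Differentiable ℝ f)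
    (hlip : ∀ x y, ‖gradient f x - gradient f y‖ ≤ L * ‖x - y‖)
    (fμ : EuclideanSpace ℝ (Fin d) → ℝ)
    (hfμ : ∀ x, fμ x = ∫ u, f (x + μ • u) ∂(stdGaussian d))
    (x : EuclideanSpace ℝ (Fin d)) :
    ‖gradient fμ x - gradient f x‖ ^ 2 ≤ μ ^ 2 * L ^ 2 * ((d : ℝ) + 3) ^ 3 / 4 := by
  rw [stdGaussian_eq_probabilityTheory_stdGaussian] at hfμ
  have hd : (d : ℝ) ≤ ((d : ℝ) + 3) ^ 3 / 4 := by
    have hd₀ : (0 : ℝ) ≤ d := d.cast_nonneg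
    nlinarith [pow_nonneg hd₀ 2, pow_nonneg hd₀ 3]
  calc ‖gradient fμ x - gradient f x‖ ^ 2 ≤ μ ^ 2 * L ^ 2 * d := by
        simpa only [finrank_euclideanSpace_fin] using
          gaussian_smoothing_gradient_bound_general hdiff hlip hfμ x
    _ ≤ μ ^ 2 * L ^ 2 * (((d : ℝ) + 3) ^ 3 / 4) := by gcongr
    _ = μ ^ 2 * L ^ 2 * ((d : ℝ) + 3) ^ 3 / 4 := by ring
end

section
/- Let f : ℝ^d → ℝ be L-smooth and let μ > 0. Then for every x ∈ ℝ^d, the second moment of the two-point Gaussian gradient estimator satisfies E_u[ ‖ĝ_μ(x; u)‖² ] ≤ 2(d + 4) ‖∇f(x)‖² + μ² L² (d + 6)³ / 2, where u ~ N(0, I_d). -/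
open MeasureTheory ProbabilityTheory

/-!
Put `n = dim E`. The quadratic Taylor bound gives
`|(f (x + μ u) - f x) / μ - ⟪∇ f x, u⟫| ≤ |μ| L ‖u‖² / 2`, so `‖ĝ_μ(x; u)‖²` is at most
`2 ⟪∇ f x, u⟫² ‖u‖² + μ² L² ‖u‖⁶ / 2`. Both terms have explicit Gaussian means, `(n + 2) ‖∇ f x‖²`
for `⟪∇ f x, u⟫² ‖u‖²` and `n (n + 2) (n + 4)` for `‖u‖⁶`, by Stein's identity
`E[⟪v, u⟫ g(u)] = E[Dg(u) v]` applied to `g(u) = ⟪v, u⟫ ‖u‖ ^ (2 * k)`.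
-/

open Module
open scoped RealInnerProductSpace Gradient

section Taylor

variable {E F : Type*} [NormedAddCommGroup E] [NormedSpace ℝ E]
  [NormedAddCommGroup F] [NormedSpace ℝ F]

lemma norm_sub_sub_fderiv_le_of_lipschitz {f : E → F} {L : ℝ} {x : E} (hf : Differentiable ℝ f)
    (hlip : ∀ y, ‖fderiv ℝ f y - fderiv ℝ f x‖ ≤ L * ‖y - x‖) (v : E) :
    ‖f (x + v) - f x - fderiv ℝ f x v‖ ≤ L / 2 * ‖v‖ ^ 2 := by
  have hremainder (t : ℝ) : HasDerivAt (fun s : ℝ => f (x + s • v) - f x - s • fderiv ℝ f x v)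
      ((fderiv ℝ f (x + t • v) - fderiv ℝ f x) v) t := by
    have hline : HasDerivAt (fun s : ℝ => x + s • v) v t := by
      simpa using ((hasDerivAt_id t).smul_const v).const_add x
    refine ((((hf _).hasFDerivAt.comp_hasDerivAt t hline).sub_const (f x)).sub
      ((hasDerivAt_id t).smul_const (fderiv ℝ f x v))).congr_deriv ?_
    rw [one_smul, sub_apply]
  have hbound (t : ℝ) : HasDerivAt (fun s : ℝ => L / 2 * ‖v‖ ^ 2 * s ^ 2) (L * ‖v‖ ^ 2 * t) t := by
    refine ((hasDerivAt_pow 2 t).const_mul (L / 2 * ‖v‖ ^ 2)).congr_deriv ?_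
    rw [Nat.cast_ofNat, Nat.add_one_sub_one, pow_one]
    ring
  have hderiv_le (t : ℝ) (ht : t ∈ Set.Ico (0 : ℝ) 1) :
      ‖(fderiv ℝ f (x + t • v) - fderiv ℝ f x) v‖ ≤ L * ‖v‖ ^ 2 * t :=
    calc ‖(fderiv ℝ f (x + t • v) - fderiv ℝ f x) v‖
        ≤ ‖fderiv ℝ f (x + t • v) - fderiv ℝ f x‖ * ‖v‖ := ContinuousLinearMap.le_opNorm _ _
      _ ≤ L * ‖x + t • v - x‖ * ‖v‖ := by gcongr; exact hlip _
      _ = L * ‖v‖ ^ 2 * t := by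
        rw [add_sub_cancel_left, norm_smul, Real.norm_of_nonneg ht.1]
        ring
  simpa using image_norm_le_of_norm_deriv_right_le_deriv_boundary
    (fun t _ => (hremainder t).continuousAt.continuousWithinAt)
    (fun t _ => (hremainder t).hasDerivWithinAt) (by simp) hbound hderiv_le
    (Set.right_mem_Icc.2 zero_le_one)

end Taylor

section Estimator

variable {E : Type*} [NormedAddCommGroup E] [InnerProductSpace ℝ E] [CompleteSpace E]
  {f : E → ℝ} {L μ : ℝ} {x : E}

lemma abs_sub_sub_inner_gradient_le_of_lipschitz (hf : Differentiable ℝ f)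
    (hlip : ∀ y, ‖∇ f y - ∇ f x‖ ≤ L * ‖y - x‖) (v : E) :
    |f (x + v) - f x - ⟪∇ f x, v⟫| ≤ L / 2 * ‖v‖ ^ 2 := by
  rw [inner_gradient_left]
  refine norm_sub_sub_fderiv_le_of_lipschitz hf (fun y => ?_) v
  simpa only [← toDual_gradient, ← map_sub, LinearIsometryEquiv.norm_map] using hlip y

lemma abs_div_sub_inner_gradient_le_of_lipschitz (hμ : μ ≠ 0) (hf : Differentiable ℝ f)
    (hlip : ∀ y, ‖∇ f y - ∇ f x‖ ≤ L * ‖y - x‖) (u : E) :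
    |(f (x + μ • u) - f x) / μ - ⟪∇ f x, u⟫| ≤ |μ| * L / 2 * ‖u‖ ^ 2 := by
  refine le_of_mul_le_mul_left ?_ (abs_pos.2 hμ)
  calc |μ| * |(f (x + μ • u) - f x) / μ - ⟪∇ f x, u⟫|
      = |f (x + μ • u) - f x - ⟪∇ f x, μ • u⟫| := by
        rw [← abs_mul, mul_sub, mul_div_cancel₀ _ hμ, real_inner_smul_right]
    _ ≤ L / 2 * ‖μ • u‖ ^ 2 := abs_sub_sub_inner_gradient_le_of_lipschitz hf hlip _
    _ = |μ| * (|μ| * L / 2 * ‖u‖ ^ 2) := by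
        rw [norm_smul, Real.norm_eq_abs]
        ring

lemma norm_sq_div_smul_le_of_lipschitz_gradient (hμ : μ ≠ 0) (hf : Differentiable ℝ f)
    (hlip : ∀ y, ‖∇ f y - ∇ f x‖ ≤ L * ‖y - x‖) (u : E) :
    ‖((f (x + μ • u) - f x) / μ) • u‖ ^ 2
      ≤ 2 * (⟪∇ f x, u⟫ ^ 2 * ‖u‖ ^ 2) + μ ^ 2 * L ^ 2 / 2 * ‖u‖ ^ 6 := by
  set q := (f (x + μ • u) - f x) / μ
  set a := ⟪∇ f x, u⟫
  have hdiff_sq : (q - a) ^ 2 ≤ (|μ| * L / 2 * ‖u‖ ^ 2) ^ 2 :=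
    sq_le_sq.2 ((abs_div_sub_inner_gradient_le_of_lipschitz hμ hf hlip u).trans (le_abs_self _))
  calc ‖q • u‖ ^ 2 = (a + (q - a)) ^ 2 * ‖u‖ ^ 2 := by
        rw [norm_smul, mul_pow, Real.norm_eq_abs, sq_abs, add_sub_cancel]
    _ ≤ 2 * (a ^ 2 + (q - a) ^ 2) * ‖u‖ ^ 2 := by gcongr; exact add_sq_le
    _ ≤ 2 * (a ^ 2 + (|μ| * L / 2 * ‖u‖ ^ 2) ^ 2) * ‖u‖ ^ 2 := by gcongr
    _ = 2 * (a ^ 2 * ‖u‖ ^ 2) + μ ^ 2 * L ^ 2 / 2 * ‖u‖ ^ 6 := by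
        rw [← sq_abs μ]
        ring

end Estimator

section StdGaussian

variable {E F : Type*} [NormedAddCommGroup E] [InnerProductSpace ℝ E]

/-- The density of the standard Gaussian measure `ProbabilityTheory.stdGaussian E` with respect to
Lebesgue measure, so that Gaussian expectations can be integrated by parts. -/
noncomputable def stdGaussianPDFReal (x : E) : ℝ :=
  ((2 * Real.pi) ^ (finrank ℝ E / 2 : ℝ))⁻¹ * Real.exp (-(1 / 2) * ‖x‖ ^ 2)

-- For `k = 0` the truncated `k - 1` is harmless, as its term has coefficient `2 * k = 0`.
lemma hasFDerivAt_norm_pow_two_mul (k : ℕ) (x : E) :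
    HasFDerivAt (fun y => ‖y‖ ^ (2 * k)) ((2 * k * ‖x‖ ^ (2 * (k - 1))) • innerSL ℝ x) x := by
  simp only [pow_mul]
  refine ((hasStrictFDerivAt_norm_sq x).hasFDerivAt.pow k).congr_fderiv ?_
  module

lemma stdGaussianPDFReal_nonneg (x : E) : 0 ≤ stdGaussianPDFReal x := by
  unfold stdGaussianPDFReal; positivity

lemma hasFDerivAt_stdGaussianPDFReal (x : E) :
    HasFDerivAt stdGaussianPDFReal (-(stdGaussianPDFReal x • innerSL ℝ x)) x := by
  have h : HasFDerivAt (fun y : E => -(1 / 2 : ℝ) * ‖y‖ ^ 2) (-innerSL ℝ x) x := by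
    refine ((hasStrictFDerivAt_norm_sq x).hasFDerivAt.const_mul _).congr_fderiv ?_
    module
  refine (h.exp.const_mul _).congr_fderiv ?_
  rw [smul_smul, smul_neg, stdGaussianPDFReal]

variable [MeasurableSpace E] [BorelSpace E]

lemma measurable_stdGaussianPDFReal : Measurable (stdGaussianPDFReal (E := E)) := by
  unfold stdGaussianPDFReal; fun_prop

variable [FiniteDimensional ℝ E]

lemma integral_stdGaussianPDFReal_smul_cexp (t : E) :
    ∫ x : E, stdGaussianPDFReal x • Complex.exp (⟪x, t⟫ * Complex.I)
      = Complex.exp (-‖t‖ ^ 2 / 2) := by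
  set Z : ℝ := (2 * Real.pi) ^ (finrank ℝ E / 2 : ℝ) with hZ
  have hZ₀ : (Z : ℂ) ≠ 0 := Complex.ofReal_ne_zero.2 (by positivity)
  have hZ_cpow : (Real.pi / (1 / 2 : ℂ)) ^ (finrank ℝ E / 2 : ℂ) = Z := by
    rw [hZ, Complex.ofReal_cpow (by positivity)]
    push_cast
    ring_nf
  calc ∫ x : E, stdGaussianPDFReal x • Complex.exp (⟪x, t⟫ * Complex.I)
      = ∫ x : E, (Z : ℂ)⁻¹ *
          Complex.exp (-(1 / 2) * ‖x‖ ^ 2 + Complex.I * ⟪t, x⟫) := by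
        congr with x
        rw [stdGaussianPDFReal, ← hZ, Complex.real_smul, Complex.exp_add, real_inner_comm]
        push_cast
        ring_nf
    _ = (Z : ℂ)⁻¹ * (Z * Complex.exp (Complex.I ^ 2 * ‖t‖ ^ 2 / (4 * (1 / 2)))) := by
        rw [integral_const_mul,
          GaussianFourier.integral_cexp_neg_mul_sq_norm_add (by norm_num), hZ_cpow]
    _ = Complex.exp (-‖t‖ ^ 2 / 2) := by
        rw [inv_mul_cancel_left₀ hZ₀, Complex.I_sq]
        ring_nf

lemma integrable_stdGaussianPDFReal : Integrable (stdGaussianPDFReal (E := E)) := by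
  have h : Integrable fun x : E => Real.exp (-(1 / 2) * ‖x‖ ^ 2) := by
    refine .of_integral_ne_zero ?_
    rw [GaussianFourier.integral_rexp_neg_mul_sq_norm one_half_pos]
    positivity
  exact h.const_mul _

lemma stdGaussian_eq_withDensity :
    ProbabilityTheory.stdGaussian E
      = volume.withDensity fun x => ENNReal.ofReal (stdGaussianPDFReal x) := by
  have := isFiniteMeasure_withDensity_ofReal (integrable_stdGaussianPDFReal (E := E)).2
  refine Measure.ext_of_charFun (funext fun t => ?_)
  rw [charFun_stdGaussian, charFun_apply, integral_withDensity_eq_integral_toReal_smul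
    measurable_stdGaussianPDFReal.ennreal_ofReal (.of_forall fun _ => ENNReal.ofReal_lt_top)]
  simp only [ENNReal.toReal_ofReal (stdGaussianPDFReal_nonneg _),
    integral_stdGaussianPDFReal_smul_cexp]

variable [NormedAddCommGroup F] [NormedSpace ℝ F]

lemma integral_stdGaussian_eq_integral_smul (g : E → F) :
    ∫ x, g x ∂(ProbabilityTheory.stdGaussian E) = ∫ x, stdGaussianPDFReal x • g x := by
  rw [stdGaussian_eq_withDensity, integral_withDensity_eq_integral_toReal_smul
    measurable_stdGaussianPDFReal.ennreal_ofReal (.of_forall fun _ => ENNReal.ofReal_lt_top)]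
  simp only [ENNReal.toReal_ofReal (stdGaussianPDFReal_nonneg _)]

lemma integrable_stdGaussian_iff {g : E → F} :
    Integrable g (ProbabilityTheory.stdGaussian E) ↔
      Integrable fun x => stdGaussianPDFReal x • g x := by
  rw [stdGaussian_eq_withDensity, integrable_withDensity_iff_integrable_smul'
    measurable_stdGaussianPDFReal.ennreal_ofReal (.of_forall fun _ => ENNReal.ofReal_lt_top)]
  simp only [ENNReal.toReal_ofReal (stdGaussianPDFReal_nonneg _)]

lemma integral_inner_smul_stdGaussian_eq_integral_fderiv {g : E → F} {g' : E → E →L[ℝ] F} {v : E}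
    (hg : ∀ x, HasFDerivAt g (g' x) x)
    (hg_int : Integrable g (ProbabilityTheory.stdGaussian E))
    (hvg_int : Integrable (fun x => ⟪v, x⟫ • g x) (ProbabilityTheory.stdGaussian E))
    (hg'_int : Integrable (fun x => g' x v) (ProbabilityTheory.stdGaussian E)) :
    ∫ x, ⟪v, x⟫ • g x ∂(ProbabilityTheory.stdGaussian E)
      = ∫ x, g' x v ∂(ProbabilityTheory.stdGaussian E) := by
  rw [integrable_stdGaussian_iff] at hg_int hvg_int hg'_int
  have hpdf (x : E) : (-(stdGaussianPDFReal x • innerSL ℝ x)) v • g x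
      = -(stdGaussianPDFReal x • ⟪v, x⟫ • g x) := by
    simp [smul_smul, real_inner_comm]
  have h := integral_bilinear_hasFDerivAt_right_eq_neg_left_of_integrable (μ := volume)
    (B := ContinuousLinearMap.lsmul ℝ ℝ) (v := v)
    (hvg_int.neg.congr (.of_forall fun x => (hpdf x).symm)) hg'_int hg_int
    (fun x _ => hasFDerivAt_stdGaussianPDFReal x) (fun x _ => hg x)
  simp only [ContinuousLinearMap.lsmul_apply, hpdf, integral_neg, neg_neg] at h
  rw [integral_stdGaussian_eq_integral_smul, integral_stdGaussian_eq_integral_smul, h]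

lemma integrable_inner_pow_mul_norm_pow_stdGaussian (v : E) (m n : ℕ) :
    Integrable (fun x => ⟪v, x⟫ ^ m * ‖x‖ ^ n) (ProbabilityTheory.stdGaussian E) := by
  have hnorm : Integrable (fun x => ‖x‖ ^ (m + n)) (ProbabilityTheory.stdGaussian E) :=
    (IsGaussian.memLp_id _ (m + n : ℕ) (ENNReal.natCast_ne_top _)).integrable_norm_pow'
  refine (hnorm.const_mul (‖v‖ ^ m)).mono' (by fun_prop) (.of_forall fun x => ?_)
  calc ‖⟪v, x⟫ ^ m * ‖x‖ ^ n‖ = ‖⟪v, x⟫‖ ^ m * ‖x‖ ^ n := by simp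
    _ ≤ (‖v‖ * ‖x‖) ^ m * ‖x‖ ^ n := by gcongr; exact norm_inner_le_norm v x
    _ = ‖v‖ ^ m * ‖x‖ ^ (m + n) := by ring

lemma integrable_norm_pow_stdGaussian (n : ℕ) :
    Integrable (fun x => ‖x‖ ^ n) (ProbabilityTheory.stdGaussian E) := by
  simpa using integrable_inner_pow_mul_norm_pow_stdGaussian (0 : E) 0 n

lemma integral_inner_sq_mul_norm_pow_stdGaussian (v : E) (k : ℕ) :
    ∫ x, ⟪v, x⟫ ^ 2 * ‖x‖ ^ (2 * k) ∂(ProbabilityTheory.stdGaussian E)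
      = ‖v‖ ^ 2 * ∫ x, ‖x‖ ^ (2 * k) ∂(ProbabilityTheory.stdGaussian E)
        + 2 * k * ∫ x, ⟪v, x⟫ ^ 2 * ‖x‖ ^ (2 * (k - 1)) ∂(ProbabilityTheory.stdGaussian E) := by
  have hint := integrable_inner_pow_mul_norm_pow_stdGaussian v
  have hint_norm := (integrable_norm_pow_stdGaussian (E := E) (2 * k)).const_mul (‖v‖ ^ 2)
  have hint_inner := (hint 2 (2 * (k - 1))).const_mul (2 * k)
  have hderiv (x : E) :
      HasFDerivAt (fun y => ⟪v, y⟫ * ‖y‖ ^ (2 * k))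
        (⟪v, x⟫ • ((2 * k * ‖x‖ ^ (2 * (k - 1))) • innerSL ℝ x) + ‖x‖ ^ (2 * k) • innerSL ℝ v) x :=
    (innerSL ℝ v).hasFDerivAt.mul (hasFDerivAt_norm_pow_two_mul k x)
  have hderiv_apply (x : E) :
      (⟪v, x⟫ • ((2 * k * ‖x‖ ^ (2 * (k - 1))) • innerSL ℝ x) + ‖x‖ ^ (2 * k) • innerSL ℝ v) v
        = ‖v‖ ^ 2 * ‖x‖ ^ (2 * k) + 2 * k * (⟪v, x⟫ ^ 2 * ‖x‖ ^ (2 * (k - 1))) := by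
    simp only [add_apply, smul_apply, coe_innerSL_apply, real_inner_comm v x,
      real_inner_self_eq_norm_sq, smul_eq_mul]
    ring
  have hmul (x : E) : ⟪v, x⟫ • (⟪v, x⟫ * ‖x‖ ^ (2 * k)) = ⟪v, x⟫ ^ 2 * ‖x‖ ^ (2 * k) := by
    rw [smul_eq_mul]
    ring
  have hstein := integral_inner_smul_stdGaussian_eq_integral_fderiv (v := v) hderiv
    (by simpa using hint 1 (2 * k)) (by simpa only [hmul] using hint 2 (2 * k))
    (by simp only [hderiv_apply]; exact hint_norm.add hint_inner)
  simpa only [hmul, hderiv_apply, integral_add hint_norm hint_inner, integral_const_mul]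
    using hstein

lemma sum_integral_inner_sq_mul_norm_pow_stdGaussian {ι : Type*} [Fintype ι]
    (b : OrthonormalBasis ι ℝ E) (n : ℕ) :
    ∑ i, ∫ x, ⟪b i, x⟫ ^ 2 * ‖x‖ ^ n ∂(ProbabilityTheory.stdGaussian E)
      = ∫ x, ‖x‖ ^ (n + 2) ∂(ProbabilityTheory.stdGaussian E) := by
  rw [← integral_finsetSum _ fun i _ => integrable_inner_pow_mul_norm_pow_stdGaussian (b i) 2 n]
  simp only [← Finset.sum_mul, b.sum_sq_inner_right, ← pow_add, add_comm 2 n]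

lemma integral_norm_pow_two_mul_succ_stdGaussian (k : ℕ) :
    ∫ x, ‖x‖ ^ (2 * (k + 1)) ∂(ProbabilityTheory.stdGaussian E)
      = (finrank ℝ E + 2 * k) * ∫ x, ‖x‖ ^ (2 * k) ∂(ProbabilityTheory.stdGaussian E) := by
  have hsum := sum_integral_inner_sq_mul_norm_pow_stdGaussian (stdOrthonormalBasis ℝ E)
  rw [mul_add_one, ← hsum]
  simp only [integral_inner_sq_mul_norm_pow_stdGaussian _ k, OrthonormalBasis.norm_eq_one,
    Finset.sum_add_distrib, ← Finset.mul_sum, hsum]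
  rcases k with _ | k
  · simp
  · simp only [one_pow, mul_add_one, Finset.sum_const, Finset.card_univ, Fintype.card_fin,
      nsmul_eq_mul, one_mul, Nat.cast_add, Nat.cast_one, add_tsub_cancel_right]
    ring

lemma integral_norm_pow_two_mul_stdGaussian (k : ℕ) :
    ∫ x, ‖x‖ ^ (2 * k) ∂(ProbabilityTheory.stdGaussian E)
      = ∏ j ∈ Finset.range k, (finrank ℝ E + 2 * j : ℝ) := by
  induction k with
  | zero => simp
  | succ k ih =>
    rw [integral_norm_pow_two_mul_succ_stdGaussian, ih, Finset.prod_range_succ, mul_comm]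

lemma integral_norm_pow_six_stdGaussian :
    ∫ x, ‖x‖ ^ 6 ∂(ProbabilityTheory.stdGaussian E)
      = finrank ℝ E * (finrank ℝ E + 2) * (finrank ℝ E + 4) := by
  rw [integral_norm_pow_two_mul_stdGaussian 3]
  norm_num [Finset.prod_range_succ]

lemma integral_inner_sq_mul_norm_sq_stdGaussian (v : E) :
    ∫ x, ⟪v, x⟫ ^ 2 * ‖x‖ ^ 2 ∂(ProbabilityTheory.stdGaussian E)
      = (finrank ℝ E + 2) * ‖v‖ ^ 2 := by
  have hinner_sq : ∫ x, ⟪v, x⟫ ^ 2 ∂(ProbabilityTheory.stdGaussian E) = ‖v‖ ^ 2 := by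
    simpa using integral_inner_sq_mul_norm_pow_stdGaussian v 0
  have hnorm_sq : ∫ x, ‖x‖ ^ 2 ∂(ProbabilityTheory.stdGaussian E) = finrank ℝ E := by
    simpa using integral_norm_pow_two_mul_stdGaussian (E := E) 1
  have h := integral_inner_sq_mul_norm_pow_stdGaussian v 1
  simp only [mul_one, hnorm_sq, Nat.cast_one, Nat.sub_self, mul_zero, pow_zero, hinner_sq] at h
  linarith

theorem gaussian_estimator_second_moment_bound_general {f : E → ℝ} {L μ : ℝ} {x : E}
    (hμ : μ ≠ 0) (hf : Differentiable ℝ f) (hlip : ∀ y, ‖∇ f y - ∇ f x‖ ≤ L * ‖y - x‖) :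
    ∫ u, ‖((f (x + μ • u) - f x) / μ) • u‖ ^ 2 ∂(ProbabilityTheory.stdGaussian E)
      ≤ 2 * (finrank ℝ E + 2) * ‖∇ f x‖ ^ 2
        + μ ^ 2 * L ^ 2 * (finrank ℝ E * (finrank ℝ E + 2) * (finrank ℝ E + 4)) / 2 := by
  have hint_inner :=
    (integrable_inner_pow_mul_norm_pow_stdGaussian (∇ f x) 2 2).const_mul 2
  have hint_norm :=
    (integrable_norm_pow_stdGaussian (E := E) 6).const_mul (μ ^ 2 * L ^ 2 / 2)
  calc ∫ u, ‖((f (x + μ • u) - f x) / μ) • u‖ ^ 2 ∂(ProbabilityTheory.stdGaussian E)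
      ≤ ∫ u, (2 * (⟪∇ f x, u⟫ ^ 2 * ‖u‖ ^ 2) + μ ^ 2 * L ^ 2 / 2 * ‖u‖ ^ 6)
          ∂(ProbabilityTheory.stdGaussian E) :=
        integral_mono_of_nonneg (.of_forall fun _ => by positivity) (hint_inner.add hint_norm)
          (.of_forall (norm_sq_div_smul_le_of_lipschitz_gradient hμ hf hlip))
    _ = 2 * ((finrank ℝ E + 2) * ‖∇ f x‖ ^ 2)
        + μ ^ 2 * L ^ 2 / 2 * (finrank ℝ E * (finrank ℝ E + 2) * (finrank ℝ E + 4)) := by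
        rw [integral_add hint_inner hint_norm, integral_const_mul, integral_const_mul,
          integral_inner_sq_mul_norm_sq_stdGaussian, integral_norm_pow_six_stdGaussian]
    _ = _ := by ring

end StdGaussian

lemma stdGaussian_eq_stdGaussian_euclideanSpace (d : ℕ) :
    stdGaussian d = ProbabilityTheory.stdGaussian (EuclideanSpace ℝ (Fin d)) :=
  map_pi_eq_stdGaussian

/-- Second moment bound for the two-point Gaussian gradient estimator:
`E_u[‖ĝ_μ(x; u)‖²] ≤ 2(d + 4)‖∇f(x)‖² + μ² L² (d + 6)³ / 2`. -/
theorem gaussian_estimator_second_moment_bound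
    (d : ℕ) (L μ : ℝ) (hμ : 0 < μ)
    (f : EuclideanSpace ℝ (Fin d) → ℝ)
    (hdiff : Differentiable ℝ f)
    (hlip : ∀ x y, ‖gradient f x - gradient f y‖ ≤ L * ‖x - y‖)
    (x : EuclideanSpace ℝ (Fin d)) :
    ∫ u, ‖((f (x + μ • u) - f x) / μ) • u‖ ^ 2 ∂(stdGaussian d)
      ≤ 2 * ((d : ℝ) + 4) * ‖gradient f x‖ ^ 2 + μ ^ 2 * L ^ 2 * ((d : ℝ) + 6) ^ 3 / 2 := by
  have hbound := gaussian_estimator_second_moment_bound_general hμ.ne' hdiff fun y => hlip y x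
  rw [finrank_euclideanSpace_fin, ← stdGaussian_eq_stdGaussian_euclideanSpace] at hbound
  have hpoly : (d : ℝ) * (d + 2) * (d + 4) ≤ (d + 6) ^ 3 := by
    rw [pow_three']
    gcongr <;> linarith
  refine hbound.trans ?_
  gcongr
  norm_num
end
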